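/- Let π be a continuous piecewise linear minimal valid function (its breakpoints need not be rational). Then π is extreme if and only if π is a facet. -/

import Mathlib

/-- A finite-support function `y : ℝ → ℕ` is feasible if `∑ r, r·y(r) − f ∈ ℤ`. -/
def Feasible (f : ℝ) (y : ℝ →₀ ℕ) : Prop :=
  ∃ z : ℤ, (∑ r ∈ y.support, r * (y r : ℝ)) - f = (z : ℝ)

/-- `π` is a valid function: nonnegative, and `∑ r, π(r)·y(r) ≥ 1` for every feasible `y`. -/
def Valid (f : ℝ) (π : ℝ → ℝ) : Prop :=
  (∀ x, 0 ≤ π x) ∧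
    ∀ y : ℝ →₀ ℕ, Feasible f y → 1 ≤ ∑ r ∈ y.support, π r * (y r : ℝ)

/-- A valid function is minimal if no other valid function is pointwise ≤ it. -/
def MinimalValid (f : ℝ) (π : ℝ → ℝ) : Prop :=
  Valid f π ∧ ¬ ∃ π' : ℝ → ℝ, Valid f π' ∧ (∀ x, π' x ≤ π x) ∧ π' ≠ π

/-- `P(π)`: the set of feasible `y` with `∑ r, π(r)·y(r) = 1`. -/
def Pset (f : ℝ) (π : ℝ → ℝ) : Set (ℝ →₀ ℕ) :=
  {y | Feasible f y ∧ ∑ r ∈ y.support, π r * (y r : ℝ) = 1}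

/-- `E(π) = {(x,y) : π(x) + π(y) = π(x+y)}`. -/
def Eset (π : ℝ → ℝ) : Set (ℝ × ℝ) :=
  {p | π p.1 + π p.2 = π (p.1 + p.2)}

/-- A valid function `π` is a facet if every valid `π'` with `P(π) ⊆ P(π')` equals `π`. -/
def IsFacet (f : ℝ) (π : ℝ → ℝ) : Prop :=
  Valid f π ∧ ∀ π' : ℝ → ℝ, Valid f π' → Pset f π ⊆ Pset f π' → π' = π

/-- A valid function `π` is a weak facet if every valid `π'` with `P(π) ⊆ P(π')`
has `P(π) = P(π')`. -/
def IsWeakFacet (f : ℝ) (π : ℝ → ℝ) : Prop :=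
  Valid f π ∧ ∀ π' : ℝ → ℝ, Valid f π' → Pset f π ⊆ Pset f π' → Pset f π = Pset f π'

/-- A valid function `π` is extreme if whenever `π = (π¹ + π²)/2` with `π¹, π²` valid,
then `π¹ = π² = π`. -/
def ExtremeFunc (f : ℝ) (π : ℝ → ℝ) : Prop :=
  Valid f π ∧ ∀ π₁ π₂ : ℝ → ℝ, Valid f π₁ → Valid f π₂ →
    (∀ x, π x = (π₁ x + π₂ x) / 2) → π₁ = π ∧ π₂ = π

/-- `π` is piecewise linear: there is a closed, discrete set `B ⊆ ℝ` of breakpoints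
such that `π` is affine on each connected component of `ℝ \ B`. -/
def PiecewiseLinear (π : ℝ → ℝ) : Prop :=
  ∃ B : Set ℝ, IsClosed B ∧
    (∀ x ∈ B, ∃ ε > (0 : ℝ), ∀ y ∈ B, |y - x| < ε → y = x) ∧
    (∀ x ∉ B, ∃ a b : ℝ, ∀ z ∈ connectedComponentIn Bᶜ x, π z = a * z + b)

/-- `π` is continuous piecewise linear. -/
def ContPiecewiseLinear (π : ℝ → ℝ) : Prop :=
  PiecewiseLinear π ∧ Continuous π

/-- The linear functional `y ↦ ∑ g(r) y(r)`. -/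
noncomputable def pairing (g : ℝ → ℝ) (y : ℝ →₀ ℕ) : ℝ := y.sum (fun r n => g r * (n : ℝ))

lemma pairing_def (g : ℝ → ℝ) (y : ℝ →₀ ℕ) :
    ∑ r ∈ y.support, g r * (y r : ℝ) = pairing g y := rfl

lemma pairing_add (g : ℝ → ℝ) (y w : ℝ →₀ ℕ) :
    pairing g (y + w) = pairing g y + pairing g w := by
  unfold pairing
  apply Finsupp.sum_add_index'
  · intro a; simp
  · intro a b c; push_cast; ring

lemma pairing_single (g : ℝ → ℝ) (r : ℝ) (n : ℕ) :
    pairing g (Finsupp.single r n) = g r * n := by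
  unfold pairing
  rw [Finsupp.sum_single_index]; simp

lemma pairing_zero (g : ℝ → ℝ) : pairing g 0 = 0 := by
  simp [pairing]

lemma pairing_nsmul (g : ℝ → ℝ) (n : ℕ) (y : ℝ →₀ ℕ) :
    pairing g (n • y) = n * pairing g y := by
  induction n with
  | zero => simp [pairing_zero]
  | succ k ih => rw [succ_nsmul, pairing_add, ih]; push_cast; ring

lemma pairing_erase (g : ℝ → ℝ) (y : ℝ →₀ ℕ) (z : ℝ) :
    pairing g y = g z * y z + pairing g (y.erase z) := by
  conv_lhs => rw [← Finsupp.single_add_erase z y]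
  rw [pairing_add, pairing_single]

lemma pairing_congr_erase (g g' : ℝ → ℝ) (y : ℝ →₀ ℕ) (z : ℝ) (h : ∀ x, x ≠ z → g x = g' x) :
    pairing g (y.erase z) = pairing g' (y.erase z) := by
  unfold pairing Finsupp.sum
  apply Finset.sum_congr rfl
  intro x hx
  have : x ≠ z := by
    rintro rfl
    simp at hx
  simp only [h x this]

lemma pairing_mono (g g' : ℝ → ℝ) (y : ℝ →₀ ℕ) (h : ∀ x, g x ≤ g' x) :
    pairing g y ≤ pairing g' y := by
  unfold pairing Finsupp.sum
  apply Finset.sum_le_sum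
  intro x _
  exact mul_le_mul_of_nonneg_right (h x) (Nat.cast_nonneg _)

lemma pairing_smul (c : ℝ) (g : ℝ → ℝ) (y : ℝ →₀ ℕ) :
    pairing (fun x => c * g x) y = c * pairing g y := by
  unfold pairing Finsupp.sum
  rw [Finset.mul_sum]
  apply Finset.sum_congr rfl
  intro x _
  ring

lemma feasible_iff (f : ℝ) (y : ℝ →₀ ℕ) :
    Feasible f y ↔ ∃ z : ℤ, pairing id y - f = z := Iff.rfl

lemma valid_iff (f : ℝ) (g : ℝ → ℝ) :
    Valid f g ↔ (∀ x, 0 ≤ g x) ∧ ∀ y, Feasible f y → 1 ≤ pairing g y := Iff.rfl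

lemma mem_Pset_iff (f : ℝ) (g : ℝ → ℝ) (y : ℝ →₀ ℕ) :
    y ∈ Pset f g ↔ Feasible f y ∧ pairing g y = 1 := Iff.rfl

lemma minimal_le {f : ℝ} {π : ℝ → ℝ} (hπ : MinimalValid f π) {π' : ℝ → ℝ}
    (h : Valid f π') (hle : ∀ x, π' x ≤ π x) : π' = π := by
  by_contra hne
  exact hπ.2 ⟨π', h, hle, hne⟩

/-- Replacement: any combination `w` congruent to `z` modulo 1 costs at least `π z`. -/
lemma minimal_replace {f : ℝ} {π : ℝ → ℝ} (hπ : MinimalValid f π) (z : ℝ) (w : ℝ →₀ ℕ)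
    (m : ℤ) (hw : pairing id w = z + m) : π z ≤ pairing π w := by
  by_contra! hlt
  have hnn := hπ.1.1
  have hw0 : 0 ≤ pairing π w :=
    Finset.sum_nonneg fun x _ => mul_nonneg (hnn x) (Nat.cast_nonneg _)
  have key : Function.update π z (pairing π w) = π := by
    apply minimal_le hπ
    · rw [valid_iff]
      constructor
      · intro x
        by_cases hx : x = z
        · subst hx; simpa using hw0
        · simpa [Function.update_of_ne hx] using hnn x
      · intro y hy
        rw [pairing_erase _ y z, pairing_congr_erase _ π y z
          (fun x hx => Function.update_of_ne hx _ _), Function.update_self]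
        have hfe : Feasible f (y z • w + y.erase z) := by
          obtain ⟨k, hk⟩ := (feasible_iff _ _).1 hy
          rw [pairing_erase _ y z] at hk
          refine (feasible_iff _ _).2 ⟨k + y z * m, ?_⟩
          rw [pairing_add, pairing_nsmul, hw]
          push_cast
          simp only [id] at hk ⊢
          linarith
        have := ((valid_iff _ _).1 hπ.1).2 _ hfe
        rw [pairing_add, pairing_nsmul] at this
        linarith
    · intro x
      by_cases hx : x = z
      · subst hx; simpa using hlt.le
      · simp [Function.update_of_ne hx]
  have := congrFun key z
  rw [Function.update_self] at this
  linarith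

lemma minimal_zero {f : ℝ} {π : ℝ → ℝ} (hπ : MinimalValid f π) : π 0 = 0 := by
  have h := minimal_replace hπ 0 0 0 (by simp [pairing_zero])
  rw [pairing_zero] at h
  exact le_antisymm h (hπ.1.1 0)

lemma minimal_subadd {f : ℝ} {π : ℝ → ℝ} (hπ : MinimalValid f π) (x y : ℝ) :
    π (x + y) ≤ π x + π y := by
  have h := minimal_replace hπ (x + y) (Finsupp.single x 1 + Finsupp.single y 1) 0
    (by simp [pairing_add, pairing_single])
  simpa [pairing_add, pairing_single] using h

lemma minimal_periodic {f : ℝ} {π : ℝ → ℝ} (hπ : MinimalValid f π) (x : ℝ) (m : ℤ) :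
    π (x + m) = π x := by
  apply le_antisymm
  · have h := minimal_replace hπ (x + m) (Finsupp.single x 1) (-m)
      (by simp [pairing_single])
    simpa [pairing_single] using h
  · have h := minimal_replace hπ x (Finsupp.single (x + m) 1) m
      (by simp [pairing_single])
    simpa [pairing_single] using h

lemma valid_sym_le {f : ℝ} {π : ℝ → ℝ} (hπ : Valid f π) (x : ℝ) : 1 ≤ π x + π (f - x) := by
  have h := ((valid_iff _ _).1 hπ).2 (Finsupp.single x 1 + Finsupp.single (f - x) 1)
    ((feasible_iff _ _).2 ⟨0, by simp [pairing_add, pairing_single]⟩)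
  simpa [pairing_add, pairing_single] using h

lemma minimal_sym_aux {f : ℝ} {π : ℝ → ℝ} (hπ : MinimalValid f π) (x : ℝ) (hx : 0 < π x) :
    π x + π (f - x) ≤ 1 := by
  by_contra! hlt
  set d := π x + π (f - x) with hd
  have hnn := hπ.1.1
  have hle1 : ∀ t, 0 ≤ t → d⁻¹ * t ≤ t := by
    intro t ht
    have : d⁻¹ ≤ 1 := inv_le_one_of_one_le₀ hlt.le
    nlinarith
  have hd0 : 0 < d := by linarith
  have hdi : 0 < d⁻¹ := inv_pos.2 hd0
  have key : Function.update π x (d⁻¹ * π x) = π := by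
    apply minimal_le hπ
    · rw [valid_iff]
      constructor
      · intro t
        by_cases ht : t = x
        · subst ht; simpa using mul_nonneg hdi.le (hnn t)
        · simpa [Function.update_of_ne ht] using hnn t
      · intro y hy
        by_cases hyx : y x = 0
        · have := ((valid_iff _ _).1 hπ.1).2 y hy
          rw [pairing_erase _ y x, hyx] at this ⊢
          rw [pairing_congr_erase _ π y x (fun t ht => Function.update_of_ne ht _ _)]
          simpa using this
        · have hle : pairing (fun t => d⁻¹ * π t) y ≤
              pairing (Function.update π x (d⁻¹ * π x)) y := by
            apply pairing_mono
            intro t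
            by_cases ht : t = x
            · subst ht; simp
            · simpa [Function.update_of_ne ht] using hle1 _ (hnn t)
          rw [pairing_smul] at hle
          refine le_trans ?_ hle
          obtain ⟨n, hn⟩ := Nat.exists_eq_succ_of_ne_zero hyx
          obtain ⟨k, hk⟩ := (feasible_iff _ _).1 hy
          rw [pairing_erase _ y x, hn] at hk
          have h2 := minimal_replace hπ (f - x) (Finsupp.single x n + y.erase x) k (by
            rw [pairing_add, pairing_single]
            push_cast at hk
            simp only [id] at hk ⊢
            linarith)
          rw [pairing_add, pairing_single] at h2
          have h3 : d ≤ pairing π y := by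
            rw [pairing_erase _ y x, hn]
            push_cast
            linarith
          calc (1 : ℝ) = d⁻¹ * d := (inv_mul_cancel₀ hd0.ne').symm
            _ ≤ _ := mul_le_mul_of_nonneg_left h3 hdi.le
    · intro t
      by_cases ht : t = x
      · subst ht; simpa using hle1 _ (hnn t)
      · simp [Function.update_of_ne ht]
  have h1 := congrFun key x
  rw [Function.update_self] at h1
  have : d * (d⁻¹ * π x) = d * π x := by rw [h1]
  rw [← mul_assoc, mul_inv_cancel₀ hd0.ne'] at this
  nlinarith

lemma minimal_sym {f : ℝ} {π : ℝ → ℝ} (hπ : MinimalValid f π) (x : ℝ) :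
    π x + π (f - x) = 1 := by
  apply le_antisymm _ (valid_sym_le hπ.1 x)
  rcases (hπ.1.1 x).lt_or_eq with h | h
  · exact minimal_sym_aux hπ x h
  · rcases (hπ.1.1 (f - x)).lt_or_eq with h' | h'
    · have := minimal_sym_aux hπ (f - x) h'
      rw [sub_sub_cancel] at this
      linarith
    · linarith

/-- Sufficient criterion for validity. -/
lemma valid_of {f : ℝ} {ρ : ℝ → ℝ} (hb : ∃ M, ∀ x, -M ≤ ρ x) (h0 : ρ 0 = 0)
    (hsub : ∀ x y, ρ (x + y) ≤ ρ x + ρ y) (hper : ∀ (x : ℝ) (m : ℤ), ρ (x + m) = ρ x)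
    (hf : ρ f = 1) : Valid f ρ := by
  have hn : ∀ (n : ℕ) x, ρ (n * x) ≤ n * ρ x := by
    intro n x
    induction n with
    | zero => simp [h0]
    | succ k ih =>
      have := hsub (k * x) x
      push_cast
      rw [show ((k : ℝ) + 1) * x = k * x + x by ring]
      linarith
  have hp : ∀ y, ρ (pairing id y) ≤ pairing ρ y := by
    intro y
    induction y using Finsupp.induction with
    | zero => simp [pairing_zero, h0]
    | single_add a b y _ _ ih =>
      rw [pairing_add, pairing_add, pairing_single, pairing_single]
      have h1 := hsub (id a * b) (pairing id y)
      have h2 := hn b a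
      rw [mul_comm] at h2
      simp only [id] at h1 ⊢
      linarith
  rw [valid_iff]
  constructor
  · intro x
    obtain ⟨M, hM⟩ := hb
    by_contra! hx
    obtain ⟨n, hn'⟩ := exists_nat_gt (M / (-ρ x))
    rw [div_lt_iff₀ (by linarith)] at hn'
    have := hn n x
    have := hM (n * x)
    linarith
  · intro y hy
    obtain ⟨k, hk⟩ := (feasible_iff _ _).1 hy
    have : pairing id y = f + k := by linarith
    have h := hp y
    rw [this, hper, hf] at h
    exact h

/-- Local structure of continuous piecewise linear functions. -/
lemma cpl_right {π : ℝ → ℝ} (h : ContPiecewiseLinear π) (x : ℝ) :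
    ∃ ε > 0, ∃ s, ∀ t, 0 ≤ t → t ≤ ε → π (x + t) = π x + s * t := by
  obtain ⟨⟨B, hB, hd, ha⟩, hc⟩ := h
  have h1 : ∃ ε > 0, ∀ y ∈ B, |y - x| < ε → y = x := by
    by_cases hx : x ∈ B
    · exact hd x hx
    · obtain ⟨ε, he, hs⟩ := Metric.isOpen_iff.1 hB.isOpen_compl x hx
      refine ⟨ε, he, fun y hy hyx => ?_⟩
      exact absurd hy (hs (by rwa [Metric.mem_ball, Real.dist_eq]))
  obtain ⟨ε, he, h1⟩ := h1
  have hsub : Set.Ioo x (x + ε) ⊆ Bᶜ := by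
    intro y hy hyB
    have := h1 y hyB (by rw [abs_lt]; constructor <;> linarith [hy.1, hy.2])
    linarith [hy.1]
  have hm : x + ε / 2 ∈ Set.Ioo x (x + ε) := ⟨by linarith, by linarith⟩
  obtain ⟨a, b, hab⟩ := ha _ (hsub hm)
  have hcc := isPreconnected_Ioo.subset_connectedComponentIn hm hsub
  have hcl : Set.EqOn π (fun z => a * z + b) (closure (Set.Ioo x (x + ε))) :=
    Set.EqOn.closure (fun z hz => hab z (hcc hz)) hc (by fun_prop)
  rw [closure_Ioo (by linarith)] at hcl
  refine ⟨ε, he, a, fun t ht hte => ?_⟩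
  have e1 := hcl (show x + t ∈ Set.Icc x (x + ε) from ⟨by linarith, by linarith⟩)
  have e2 := hcl (show x ∈ Set.Icc x (x + ε) from ⟨by linarith, by linarith⟩)
  simp only at e1 e2
  rw [e1, e2]; ring

lemma cpl_left {π : ℝ → ℝ} (h : ContPiecewiseLinear π) (x : ℝ) :
    ∃ ε > 0, ∃ s, ∀ t, 0 ≤ t → t ≤ ε → π (x - t) = π x + s * t := by
  obtain ⟨⟨B, hB, hd, ha⟩, hc⟩ := h
  have h1 : ∃ ε > 0, ∀ y ∈ B, |y - x| < ε → y = x := by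
    by_cases hx : x ∈ B
    · exact hd x hx
    · obtain ⟨ε, he, hs⟩ := Metric.isOpen_iff.1 hB.isOpen_compl x hx
      refine ⟨ε, he, fun y hy hyx => ?_⟩
      exact absurd hy (hs (by rwa [Metric.mem_ball, Real.dist_eq]))
  obtain ⟨ε, he, h1⟩ := h1
  have hsub : Set.Ioo (x - ε) x ⊆ Bᶜ := by
    intro y hy hyB
    have := h1 y hyB (by rw [abs_lt]; constructor <;> linarith [hy.1, hy.2])
    linarith [hy.2]
  have hm : x - ε / 2 ∈ Set.Ioo (x - ε) x := ⟨by linarith, by linarith⟩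
  obtain ⟨a, b, hab⟩ := ha _ (hsub hm)
  have hcc := isPreconnected_Ioo.subset_connectedComponentIn hm hsub
  have hcl : Set.EqOn π (fun z => a * z + b) (closure (Set.Ioo (x - ε) x)) :=
    Set.EqOn.closure (fun z hz => hab z (hcc hz)) hc (by fun_prop)
  rw [closure_Ioo (by linarith)] at hcl
  refine ⟨ε, he, -a, fun t ht hte => ?_⟩
  have e1 := hcl (show x - t ∈ Set.Icc (x - ε) x from ⟨by linarith, by linarith⟩)
  have e2 := hcl (show x ∈ Set.Icc (x - ε) x from ⟨by linarith, by linarith⟩)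
  simp only at e1 e2
  rw [e1, e2]; ring

lemma cpl_local {π : ℝ → ℝ} (h : ContPiecewiseLinear π) (x : ℝ) :
    ∃ ε > 0, ∃ s r, ∀ t, 0 ≤ t → t ≤ ε →
      π (x + t) = π x + s * t ∧ π (x - t) = π x + r * t := by
  obtain ⟨e1, h1, s, hs⟩ := cpl_right h x
  obtain ⟨e2, h2, r, hr⟩ := cpl_left h x
  exact ⟨min e1 e2, lt_min h1 h2, s, r, fun t ht hte =>
    ⟨hs t ht (hte.trans (min_le_left _ _)), hr t ht (hte.trans (min_le_right _ _))⟩⟩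

/-- Additivity near zero (in direction `σ`) gives a linear growth bound. -/
lemma growth_aux {θ : ℝ → ℝ} {ε σ : ℝ} (he : 0 < ε) (h1 : ∀ x, θ x ≤ 1) (h0 : θ 0 = 0)
    (hadd : ∀ s t, 0 ≤ s → 0 ≤ t → s + t ≤ ε → θ (σ * s) + θ (σ * t) = θ (σ * (s + t)))
    (t : ℝ) (ht : 0 ≤ t) : θ (σ * t) ≤ 2 / ε * t := by
  rcases ht.lt_or_eq with ht | ht
  · by_cases hte : t ≤ ε
    · have hn : ∀ n : ℕ, n * t ≤ ε → θ (σ * (n * t)) = n * θ (σ * t) := by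
        intro n
        induction n with
        | zero => intro _; simp [h0]
        | succ k ih =>
          intro hk
          push_cast at hk ⊢
          have := ih (by nlinarith)
          have h2 := hadd (k * t) t (by positivity) ht.le (by linarith)
          rw [show ((k : ℝ) + 1) * t = k * t + t by ring, ← h2, this]
          ring
      have ha : (⌊ε / t⌋₊ : ℝ) * t ≤ ε := by
        rw [← le_div_iff₀ ht]
        exact Nat.floor_le (by positivity)
      have hb : ε < (⌊ε / t⌋₊ + 1 : ℝ) * t := by
        rw [← div_lt_iff₀ ht]
        exact Nat.lt_floor_add_one _
      have hc : 1 ≤ ⌊ε / t⌋₊ := by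
        apply Nat.le_floor
        rw [le_div_iff₀ ht]
        simpa using hte
      have hc' : (1 : ℝ) ≤ ⌊ε / t⌋₊ := by exact_mod_cast hc
      have hd := hn _ ha
      have he1 := h1 (σ * (⌊ε / t⌋₊ * t))
      rw [hd] at he1
      generalize (⌊ε / t⌋₊ : ℝ) = n at *
      have hq : θ (σ * t) ≤ 1 / n := by
        rw [le_div_iff₀ (by linarith)]; linarith
      refine hq.trans ?_
      rw [div_mul_eq_mul_div, div_le_div_iff₀ (by linarith) he]
      nlinarith
    · refine (h1 _).trans ?_
      rw [div_mul_eq_mul_div, le_div_iff₀ he]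
      linarith
  · subst ht
    simp [h0]

/-- Comparison on a cone. -/
lemma cone_lemma {F G : ℝ → ℝ → ℝ} {α β ε L : ℝ} (he : 0 < ε) (hL : 0 ≤ L)
    (hF : ∀ a b, 0 ≤ a → a ≤ ε → 0 ≤ b → b ≤ ε → F a b = α * a + β * b)
    (hFn : ∀ a b, 0 ≤ F a b) (hFG : ∀ a b, F a b = 0 → G a b = 0)
    (hG : ∀ a b a' b', |G a b - G a' b'| ≤ L * (|a - a'| + |b - b'|)) :
    ∃ C, 0 ≤ C ∧ ∀ a b, 0 ≤ a → a ≤ ε → 0 ≤ b → b ≤ ε → |G a b| ≤ C * F a b := by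
  have hα : 0 ≤ α := by
    have h := hFn ε 0
    rw [hF ε 0 he.le le_rfl le_rfl he.le] at h
    simp only [mul_zero, add_zero] at h
    exact nonneg_of_mul_nonneg_left h he
  have hβ : 0 ≤ β := by
    have h := hFn 0 ε
    rw [hF 0 ε le_rfl he.le he.le le_rfl] at h
    simp only [mul_zero, zero_add] at h
    exact nonneg_of_mul_nonneg_left h he
  have h00 : G 0 0 = 0 := hFG 0 0 (by rw [hF 0 0 le_rfl he.le le_rfl he.le]; ring)
  rcases hα.lt_or_eq with hα | hα <;> rcases hβ.lt_or_eq with hβ | hβ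
  · refine ⟨L / α + L / β, by positivity, fun a b ha ha' hb hb' => ?_⟩
    have h := hG a b 0 0
    rw [h00, sub_zero, sub_zero, sub_zero, abs_of_nonneg ha, abs_of_nonneg hb] at h
    rw [hF a b ha ha' hb hb']
    have e : (L / α + L / β) * (α * a + β * b)
        = L * (a + b) + (L / α * (β * b) + L / β * (α * a)) := by
      field_simp; ring
    have : 0 ≤ L / α * (β * b) + L / β * (α * a) := by positivity
    linarith
  · refine ⟨L / α, by positivity, fun a b ha ha' hb hb' => ?_⟩
    have h := hG a b 0 b
    rw [hFG 0 b (by rw [hF 0 b le_rfl he.le hb hb', ← hβ]; ring), sub_self, abs_zero,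
      sub_zero, sub_zero, abs_of_nonneg ha, add_zero] at h
    rw [hF a b ha ha' hb hb', ← hβ]
    have e : L / α * (α * a + 0 * b) = L * a := by field_simp; ring
    linarith
  · refine ⟨L / β, by positivity, fun a b ha ha' hb hb' => ?_⟩
    have h := hG a b a 0
    rw [hFG a 0 (by rw [hF a 0 ha ha' le_rfl he.le, ← hα]; ring), sub_self, abs_zero,
      sub_zero, sub_zero, abs_of_nonneg hb, zero_add] at h
    rw [hF a b ha ha' hb hb', ← hα]
    have e : L / β * (0 * a + β * b) = L * b := by field_simp; ring
    linarith
  · refine ⟨0, le_rfl, fun a b ha ha' hb hb' => ?_⟩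
    rw [hFG a b (by rw [hF a b ha ha' hb hb', ← hα, ← hβ]; ring)]
    simp

/-- Subadditivity slack. -/
def slack (g : ℝ → ℝ) (x y : ℝ) : ℝ := g x + g y - g (x + y)

lemma slack_lip {θ : ℝ → ℝ} {L : ℝ} (hlip : ∀ x y, |θ x - θ y| ≤ L * |x - y|)
    (hL : 0 ≤ L) (x y x' y' : ℝ) :
    |slack θ x y - slack θ x' y'| ≤ 2 * L * (|x - x'| + |y - y'|) := by
  have h1 := hlip x x'
  have h2 := hlip y y'
  have h3 := hlip (x + y) (x' + y')
  have h4 : |x + y - (x' + y')| ≤ |x - x'| + |y - y'| := by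
    rw [show x + y - (x' + y') = (x - x') + (y - y') by ring]
    exact abs_add_le _ _
  have h5 : L * |x + y - (x' + y')| ≤ L * (|x - x'| + |y - y'|) :=
    mul_le_mul_of_nonneg_left h4 hL
  unfold slack
  rw [abs_le] at *
  constructor <;> linarith [h1.1, h1.2, h2.1, h2.2, h3.1, h3.2]

lemma cone_apply {π θ : ℝ → ℝ} {L ε α β x y : ℝ} (he : 0 < ε) (hL : 0 ≤ L)
    (hlip : ∀ x y, |θ x - θ y| ≤ L * |x - y|)
    (hsub : ∀ x y, 0 ≤ slack π x y) (hz : ∀ x y, slack π x y = 0 → slack θ x y = 0)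
    (u v w z : ℝ) (hu : |u| ≤ 1) (hv : |v| ≤ 1) (hw : |w| ≤ 1) (hzz : |z| ≤ 1)
    (hF : ∀ a b, 0 ≤ a → a ≤ ε → 0 ≤ b → b ≤ ε →
      slack π (x + (u * a + v * b)) (y + (w * a + z * b)) = α * a + β * b) :
    ∃ C, 0 ≤ C ∧ ∀ a b, 0 ≤ a → a ≤ ε → 0 ≤ b → b ≤ ε →
      |slack θ (x + (u * a + v * b)) (y + (w * a + z * b))| ≤
        C * slack π (x + (u * a + v * b)) (y + (w * a + z * b)) := by
  refine cone_lemma (F := fun a b => slack π (x + (u * a + v * b)) (y + (w * a + z * b)))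
    (G := fun a b => slack θ (x + (u * a + v * b)) (y + (w * a + z * b)))
    (L := 4 * L) he (by linarith) hF (fun a b => hsub _ _) (fun a b => hz _ _) ?_
  intro a b a' b'
  refine (slack_lip hlip hL _ _ _ _).trans ?_
  have aux : ∀ p q r : ℝ, |p| ≤ 1 → |q| ≤ 1 →
      |r + (p * a + q * b) - (r + (p * a' + q * b'))| ≤ |a - a'| + |b - b'| := by
    intro p q r hp hq
    rw [show r + (p * a + q * b) - (r + (p * a' + q * b')) = p * (a - a') + q * (b - b') by ring]
    refine (abs_add_le _ _).trans ?_
    rw [abs_mul, abs_mul]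
    have := mul_le_mul_of_nonneg_right hp (abs_nonneg (a - a'))
    have := mul_le_mul_of_nonneg_right hq (abs_nonneg (b - b'))
    linarith
  have h1 := aux u v x hu hv
  have h2 := aux w z y hw hzz
  have h3 := mul_le_mul_of_nonneg_left (add_le_add h1 h2) (by linarith : 0 ≤ 2 * L)
  linarith

lemma local_bound {π θ : ℝ → ℝ} (hcpl : ContPiecewiseLinear π) {L : ℝ} (hL : 0 ≤ L)
    (hlip : ∀ x y, |θ x - θ y| ≤ L * |x - y|)
    (hsub : ∀ x y, 0 ≤ slack π x y) (hz : ∀ x y, slack π x y = 0 → slack θ x y = 0)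
    (x y : ℝ) (hxy : slack π x y = 0) :
    ∃ ε > 0, ∃ C, 0 ≤ C ∧ ∀ h k, |h| ≤ ε → |k| ≤ ε →
      |slack θ (x + h) (y + k)| ≤ C * slack π (x + h) (y + k) := by
  obtain ⟨e1, he1, s1, r1, h1⟩ := cpl_local hcpl x
  obtain ⟨e2, he2, s2, r2, h2⟩ := cpl_local hcpl y
  obtain ⟨e3, he3, s3, r3, h3⟩ := cpl_local hcpl (x + y)
  obtain ⟨ε, he, l1, l2, l3⟩ : ∃ ε > 0, 2 * ε ≤ e1 ∧ 2 * ε ≤ e2 ∧ 2 * ε ≤ e3 := by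
    refine ⟨min e1 (min e2 e3) / 2, ?_, ?_, ?_, ?_⟩
    · have := lt_min he1 (lt_min he2 he3)
      linarith
    · linarith [min_le_left e1 (min e2 e3)]
    · linarith [min_le_right e1 (min e2 e3), min_le_left e2 e3]
    · linarith [min_le_right e1 (min e2 e3), min_le_right e2 e3]
  have hxy' : π x + π y = π (x + y) := by unfold slack at hxy; linarith
  obtain ⟨C1, c1, k1⟩ := cone_apply (α := s1 - s3) (β := s2 - s3) (x := x) (y := y)
    he hL hlip hsub hz 1 0 0 1
    (by simp) (by simp) (by simp) (by simp) (by
      intro a b ha ha' hb hb'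
      unfold slack
      rw [show x + (1 * a + 0 * b) = x + a by ring, show y + (0 * a + 1 * b) = y + b by ring,
        show x + a + (y + b) = x + y + (a + b) by ring, (h1 a ha (by linarith)).1,
        (h2 b hb (by linarith)).1, (h3 (a + b) (by linarith) (by linarith)).1, ← hxy']
      ring)
  obtain ⟨C2, c2, k2⟩ := cone_apply (α := r1 - r3) (β := r2 - r3) (x := x) (y := y)
    he hL hlip hsub hz (-1) 0 0 (-1)
    (by simp) (by simp) (by simp) (by simp) (by
      intro a b ha ha' hb hb'
      unfold slack
      rw [show x + (-1 * a + 0 * b) = x - a by ring, show y + (0 * a + -1 * b) = y - b by ring,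
        show x - a + (y - b) = x + y - (a + b) by ring, (h1 a ha (by linarith)).2,
        (h2 b hb (by linarith)).2, (h3 (a + b) (by linarith) (by linarith)).2, ← hxy']
      ring)
  obtain ⟨C3, c3, k3⟩ := cone_apply (α := s1 - s3) (β := s1 + r2) (x := x) (y := y)
    he hL hlip hsub hz 1 1 0 (-1)
    (by simp) (by simp) (by simp) (by simp) (by
      intro a b ha ha' hb hb'
      unfold slack
      rw [show x + (1 * a + 1 * b) = x + (a + b) by ring,
        show y + (0 * a + -1 * b) = y - b by ring,
        show x + (a + b) + (y - b) = x + y + a by ring,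
        (h1 (a + b) (by linarith) (by linarith)).1,
        (h2 b hb (by linarith)).2, (h3 a (by linarith) (by linarith)).1, ← hxy']
      ring)
  obtain ⟨C4, c4, k4⟩ := cone_apply (α := s1 + r2) (β := r2 - r3) (x := x) (y := y)
    he hL hlip hsub hz 1 0 (-1) (-1)
    (by simp) (by simp) (by simp) (by simp) (by
      intro a b ha ha' hb hb'
      unfold slack
      rw [show x + (1 * a + 0 * b) = x + a by ring,
        show y + (-1 * a + -1 * b) = y - (a + b) by ring,
        show x + a + (y - (a + b)) = x + y - b by ring,
        (h1 a (by linarith) (by linarith)).1,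
        (h2 (a + b) (by linarith) (by linarith)).2, (h3 b (by linarith) (by linarith)).2, ← hxy']
      ring)
  obtain ⟨C5, c5, k5⟩ := cone_apply (α := s2 - s3) (β := r1 + s2) (x := x) (y := y)
    he hL hlip hsub hz 0 (-1) 1 1
    (by simp) (by simp) (by simp) (by simp) (by
      intro a b ha ha' hb hb'
      unfold slack
      rw [show x + (0 * a + -1 * b) = x - b by ring,
        show y + (1 * a + 1 * b) = y + (a + b) by ring,
        show x - b + (y + (a + b)) = x + y + a by ring,
        (h1 b (by linarith) (by linarith)).2,
        (h2 (a + b) (by linarith) (by linarith)).1, (h3 a (by linarith) (by linarith)).1, ← hxy']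
      ring)
  obtain ⟨C6, c6, k6⟩ := cone_apply (α := r1 + s2) (β := r1 - r3) (x := x) (y := y)
    he hL hlip hsub hz (-1) (-1) 1 0
    (by simp) (by simp) (by simp) (by simp) (by
      intro a b ha ha' hb hb'
      unfold slack
      rw [show x + (-1 * a + -1 * b) = x - (a + b) by ring,
        show y + (1 * a + 0 * b) = y + a by ring,
        show x - (a + b) + (y + a) = x + y - b by ring,
        (h1 (a + b) (by linarith) (by linarith)).2,
        (h2 a (by linarith) (by linarith)).1, (h3 b (by linarith) (by linarith)).2, ← hxy']
      ring)
  refine ⟨ε, he, C1 + C2 + C3 + C4 + C5 + C6, by positivity, ?_⟩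
  intro h k hh hk
  have fin : ∀ (C a b u v w z : ℝ), C ≤ C1 + C2 + C3 + C4 + C5 + C6 →
      |slack θ (x + (u * a + v * b)) (y + (w * a + z * b))| ≤
        C * slack π (x + (u * a + v * b)) (y + (w * a + z * b)) →
      u * a + v * b = h → w * a + z * b = k →
      |slack θ (x + h) (y + k)| ≤ (C1 + C2 + C3 + C4 + C5 + C6) * slack π (x + h) (y + k) := by
    intro C a b u v w z hC hle e1 e2
    rw [e1, e2] at hle
    exact hle.trans (mul_le_mul_of_nonneg_right hC (hsub _ _))
  rw [abs_le] at hh hk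
  rcases le_total 0 h with hh0 | hh0 <;> rcases le_total 0 k with hk0 | hk0
  · exact fin C1 h k _ _ _ _ (by linarith) (k1 h k (by linarith) (by linarith) (by linarith)
      (by linarith)) (by ring) (by ring)
  · rcases le_total 0 (h + k) with hs | hs
    · exact fin C3 (h + k) (-k) _ _ _ _ (by linarith) (k3 _ _ (by linarith) (by linarith)
        (by linarith) (by linarith)) (by ring) (by ring)
    · exact fin C4 h (-(h + k)) _ _ _ _ (by linarith) (k4 _ _ (by linarith) (by linarith)
        (by linarith) (by linarith)) (by ring) (by ring)
  · rcases le_total 0 (h + k) with hs | hs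
    · exact fin C5 (h + k) (-h) _ _ _ _ (by linarith) (k5 _ _ (by linarith) (by linarith)
        (by linarith) (by linarith)) (by ring) (by ring)
    · exact fin C6 k (-(h + k)) _ _ _ _ (by linarith) (k6 _ _ (by linarith) (by linarith)
        (by linarith) (by linarith)) (by ring) (by ring)
  · exact fin C2 (-h) (-k) _ _ _ _ (by linarith) (k2 _ _ (by linarith) (by linarith)
      (by linarith) (by linarith)) (by ring) (by ring)

lemma global_bound {π θ : ℝ → ℝ} (hcpl : ContPiecewiseLinear π) {L : ℝ} (hL : 0 ≤ L)
    (hlip : ∀ x y, |θ x - θ y| ≤ L * |x - y|) (hbd : ∃ M, ∀ x, |θ x| ≤ M)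
    (hp1 : ∀ (x : ℝ) (m : ℤ), π (x + m) = π x) (hp2 : ∀ (x : ℝ) (m : ℤ), θ (x + m) = θ x)
    (hsub : ∀ x y, 0 ≤ slack π x y) (hz : ∀ x y, slack π x y = 0 → slack θ x y = 0) :
    ∃ C, 0 ≤ C ∧ ∀ x y, |slack θ x y| ≤ C * slack π x y := by
  have hK : IsCompact (Set.Icc (0 : ℝ) 1 ×ˢ Set.Icc (0 : ℝ) 1) :=
    isCompact_Icc.prod isCompact_Icc
  have hc := hcpl.2
  have main : ∃ C, 0 ≤ C ∧ ∀ p ∈ Set.Icc (0 : ℝ) 1 ×ˢ Set.Icc (0 : ℝ) 1,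
      |slack θ p.1 p.2| ≤ C * slack π p.1 p.2 := by
    refine hK.induction_on (p := fun s => ∃ C, 0 ≤ C ∧ ∀ p ∈ s,
      |slack θ p.1 p.2| ≤ C * slack π p.1 p.2) ?_ ?_ ?_ ?_
    · exact ⟨0, le_rfl, by simp⟩
    · rintro s t hst ⟨C, h0, h⟩
      exact ⟨C, h0, fun p hp => h p (hst hp)⟩
    · rintro s t ⟨C, h0, h⟩ ⟨C', h0', h'⟩
      refine ⟨C + C', by positivity, ?_⟩
      rintro p (hp | hp)
      · have := h p hp
        have := mul_nonneg h0' (hsub p.1 p.2)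
        linarith
      · have := h' p hp
        have := mul_nonneg h0 (hsub p.1 p.2)
        linarith
    · rintro ⟨x, y⟩ -
      rcases (hsub x y).lt_or_eq with hpos | hzero
      · obtain ⟨M, hM⟩ := hbd
        have hM0 : 0 ≤ M := (abs_nonneg _).trans (hM 0)
        have hcs : Continuous (fun p : ℝ × ℝ => slack π p.1 p.2) := by
          unfold slack; fun_prop
        refine ⟨{p | slack π x y / 2 < slack π p.1 p.2}, ?_, 3 * M / (slack π x y / 2),
          by positivity, ?_⟩
        · apply mem_nhdsWithin_of_mem_nhds
          exact (isOpen_lt continuous_const hcs).mem_nhds (by simp only [Set.mem_ofPred_eq]; linarith)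
        · intro p hp
          simp only [Set.mem_ofPred_eq] at hp
          have h1 : |slack θ p.1 p.2| ≤ 3 * M := by
            unfold slack
            have a1 := abs_le.1 (hM p.1)
            have a2 := abs_le.1 (hM p.2)
            have a3 := abs_le.1 (hM (p.1 + p.2))
            rw [abs_le]
            constructor <;> linarith [a1.1, a1.2, a2.1, a2.2, a3.1, a3.2]
          refine h1.trans ?_
          rw [div_mul_eq_mul_div, le_div_iff₀ (by linarith)]
          exact mul_le_mul_of_nonneg_left hp.le (by linarith)
      · obtain ⟨ε, he, C, hC, h⟩ := local_bound hcpl hL hlip hsub hz x y hzero.symm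
        refine ⟨Metric.ball (x, y) ε,
          mem_nhdsWithin_of_mem_nhds (Metric.ball_mem_nhds _ he), C, hC, ?_⟩
        rintro ⟨u, v⟩ hp
        rw [Metric.mem_ball, Prod.dist_eq, max_lt_iff, Real.dist_eq, Real.dist_eq] at hp
        have := h (u - x) (v - y) hp.1.le hp.2.le
        simpa using this
  obtain ⟨C, hC, h⟩ := main
  refine ⟨C, hC, fun x y => ?_⟩
  have per : ∀ g : ℝ → ℝ, (∀ (x : ℝ) (m : ℤ), g (x + m) = g x) →
      slack g x y = slack g (Int.fract x) (Int.fract y) := by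
    intro g hg
    unfold slack
    have e1 := hg (Int.fract x) ⌊x⌋
    have e2 := hg (Int.fract y) ⌊y⌋
    have e3 := hg (Int.fract x + Int.fract y) (⌊x⌋ + ⌊y⌋)
    rw [Int.fract_add_floor] at e1 e2
    rw [show Int.fract x + Int.fract y + ((⌊x⌋ + ⌊y⌋ : ℤ) : ℝ) = x + y by
      push_cast
      linarith [Int.fract_add_floor x, Int.fract_add_floor y]] at e3
    rw [e1, e2, e3]
  rw [per π hp1, per θ hp2]
  exact h (Int.fract x, Int.fract y)
    ⟨⟨Int.fract_nonneg _, (Int.fract_lt_one _).le⟩, ⟨Int.fract_nonneg _, (Int.fract_lt_one _).le⟩⟩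

lemma lip_of_subadd {θ : ℝ → ℝ} {L : ℝ} (hsub : ∀ x y, θ (x + y) ≤ θ x + θ y)
    (hg : ∀ t, θ t ≤ L * |t|) (x y : ℝ) : |θ x - θ y| ≤ L * |x - y| := by
  have h1 := hsub y (x - y)
  have h2 := hsub x (y - x)
  have h3 := hg (x - y)
  have h4 := hg (y - x)
  rw [abs_sub_comm y x] at h4
  rw [add_sub_cancel] at h1 h2
  rw [abs_le]
  constructor <;> linarith

/-- Lipschitz bound for a subadditive function inheriting the additivities of `π`. -/
lemma lip_of_additive {π θ : ℝ → ℝ} (hcpl : ContPiecewiseLinear π) (h0 : π 0 = 0)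
    (hadd : ∀ x y, π x + π y = π (x + y) → θ x + θ y = θ (x + y))
    (h1 : ∀ x, θ x ≤ 1) (hsub : ∀ x y, θ (x + y) ≤ θ x + θ y) :
    ∃ L, 0 ≤ L ∧ ∀ x y, |θ x - θ y| ≤ L * |x - y| := by
  have ht0 : θ 0 = 0 := by
    have := hadd 0 0 (by simp [h0])
    rw [add_zero] at this
    linarith
  obtain ⟨ε, he, s, r, h⟩ := cpl_local hcpl 0
  simp only [zero_add, zero_sub, h0] at h
  refine ⟨2 / ε, by positivity, lip_of_subadd hsub ?_⟩
  intro t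
  rcases le_total 0 t with ht | ht
  · rw [abs_of_nonneg ht]
    have := growth_aux (θ := θ) (σ := 1) he h1 ht0 (by
      intro a b ha hb hab
      simp only [one_mul]
      apply hadd
      rw [(h a ha (by linarith)).1, (h b hb (by linarith)).1, (h (a + b) (by linarith) hab).1]
      ring) t ht
    simpa using this
  · rw [abs_of_nonpos ht]
    have := growth_aux (θ := θ) (σ := -1) he h1 ht0 (by
      intro a b ha hb hab
      rw [mul_add]
      apply hadd
      rw [show -1 * a + -1 * b = -(a + b) by ring, neg_one_mul, neg_one_mul,
        (h a ha (by linarith)).2, (h b hb (by linarith)).2, (h (a + b) (by linarith) hab).2]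
      ring) (-t) (by linarith)
    simpa using this

lemma facet_extreme {f : ℝ} {π : ℝ → ℝ} (h : IsFacet f π) : ExtremeFunc f π := by
  have aux : ∀ π₁ π₂ : ℝ → ℝ, Valid f π₁ → Valid f π₂ →
      (∀ x, π x = (π₁ x + π₂ x) / 2) → π₁ = π := by
    intro π₁ π₂ h1 h2 hx
    apply h.2 π₁ h1
    intro y hy
    rw [mem_Pset_iff] at hy ⊢
    refine ⟨hy.1, ?_⟩
    have a1 := ((valid_iff _ _).1 h1).2 y hy.1
    have a2 := ((valid_iff _ _).1 h2).2 y hy.1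
    have e : pairing π y = (pairing π₁ y + pairing π₂ y) / 2 := by
      unfold pairing Finsupp.sum
      rw [← Finset.sum_add_distrib, Finset.sum_div]
      apply Finset.sum_congr rfl
      intro r _
      simp only [hx r]; ring
    linarith [hy.2]
  refine ⟨h.1, fun π₁ π₂ h1 h2 hx => ⟨aux π₁ π₂ h1 h2 hx, aux π₂ π₁ h2 h1 fun x => ?_⟩⟩
  rw [hx x, add_comm]

lemma extreme_facet {f : ℝ} {π : ℝ → ℝ} (hπ : MinimalValid f π) (hcpl : ContPiecewiseLinear π)
    (hE : ExtremeFunc f π) : IsFacet f π := by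
  refine ⟨hπ.1, fun θ hθ hP => ?_⟩
  have p0 := minimal_zero hπ
  have psub := minimal_subadd hπ
  have pper := minimal_periodic hπ
  have psym := minimal_sym hπ
  have pf : π f = 1 := by
    have := psym f
    rw [sub_self, p0] at this
    linarith
  -- the analogous properties of `θ`
  have tper' : ∀ (x : ℝ) (m : ℤ), θ (x + m) + θ (f - x) = 1 := by
    intro x m
    have : Finsupp.single (x + m) 1 + Finsupp.single (f - x) 1 ∈ Pset f π := by
      rw [mem_Pset_iff, feasible_iff]
      constructor
      · refine ⟨m, ?_⟩
        simp [pairing_add, pairing_single]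
        ring
      · simp only [pairing_add, pairing_single, pper, Nat.cast_one, mul_one, psym]
    have := ((mem_Pset_iff _ _ _).1 (hP this)).2
    simpa [pairing_add, pairing_single] using this
  have tsym : ∀ x, θ x + θ (f - x) = 1 := by
    intro x
    simpa using tper' x 0
  have tper : ∀ (x : ℝ) (m : ℤ), θ (x + m) = θ x := by
    intro x m
    linarith [tper' x m, tsym x]
  have tfeas : ∀ x y, Feasible f
      (Finsupp.single x 1 + Finsupp.single y 1 + Finsupp.single (f - (x + y)) 1) := by
    intro x y
    rw [feasible_iff]
    refine ⟨0, ?_⟩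
    simp [pairing_add, pairing_single]
  have tsub : ∀ x y, θ (x + y) ≤ θ x + θ y := by
    intro x y
    have := ((valid_iff _ _).1 hθ).2 _ (tfeas x y)
    simp only [pairing_add, pairing_single, Nat.cast_one, mul_one] at this
    linarith [tsym (x + y)]
  have tadd : ∀ x y, π x + π y = π (x + y) → θ x + θ y = θ (x + y) := by
    intro x y hxy
    have : Finsupp.single x 1 + Finsupp.single y 1 + Finsupp.single (f - (x + y)) 1 ∈ Pset f π := by
      rw [mem_Pset_iff]
      refine ⟨tfeas x y, ?_⟩
      simp only [pairing_add, pairing_single, Nat.cast_one, mul_one, hxy, psym]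
    have := ((mem_Pset_iff _ _ _).1 (hP this)).2
    simp only [pairing_add, pairing_single, Nat.cast_one, mul_one] at this
    linarith [tsym (x + y)]
  have t0 : θ 0 = 0 := by
    have := tadd 0 0 (by simp [p0])
    rw [add_zero] at this
    linarith
  have tf : θ f = 1 := by
    have := tsym f
    rw [sub_self, t0] at this
    linarith
  have p1 : ∀ x, π x ≤ 1 := fun x => by linarith [psym x, hπ.1.1 (f - x)]
  have t1 : ∀ x, θ x ≤ 1 := fun x => by linarith [tsym x, hθ.1 (f - x)]
  obtain ⟨L1, hL1, lip1⟩ := lip_of_additive (θ := π) hcpl p0 (fun x y h => h) p1 psub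
  obtain ⟨L2, hL2, lip2⟩ := lip_of_additive (θ := θ) hcpl p0 tadd t1 tsub
  have dbd : ∀ x, |θ x - π x| ≤ 1 := by
    intro x
    rw [abs_le]
    constructor <;> linarith [p1 x, t1 x, hπ.1.1 x, hθ.1 x]
  obtain ⟨C, hC, hb⟩ := global_bound (π := π) (θ := fun x => θ x - π x) (L := L1 + L2) hcpl
    (by positivity) (by
      intro x y
      have a1 := abs_le.1 (lip1 x y)
      have a2 := abs_le.1 (lip2 x y)
      rw [abs_le]
      constructor <;> linarith [a1.1, a1.2, a2.1, a2.2]) ⟨1, dbd⟩ pper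
    (by intro x m; simp only [pper, tper])
    (by intro x y; unfold slack; linarith [psub x y])
    (by
      intro x y h
      unfold slack at *
      have h' : π x + π y = π (x + y) := by linarith
      linarith [tadd x y h'])
  set c : ℝ := 1 / (C + 1) with hc
  have hc0 : 0 < c := by positivity
  have hc1 : c ≤ 1 := by
    rw [hc, div_le_one (by linarith)]; linarith
  have hcC : c * C ≤ 1 := by
    rw [hc, div_mul_eq_mul_div, div_le_one (by linarith)]; linarith
  have cb : ∀ x y, |c * slack (fun x => θ x - π x) x y| ≤ slack π x y := by
    intro x y
    rw [abs_mul, abs_of_pos hc0]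
    have a1 := mul_le_mul_of_nonneg_left (hb x y) hc0.le
    have a2 : 0 ≤ slack π x y := by unfold slack; linarith [psub x y]
    have a3 := mul_le_mul_of_nonneg_right hcC a2
    linarith
  have val : ∀ σ : ℝ, |σ| = c → Valid f (fun x => π x + σ * (θ x - π x)) := by
    intro σ hσ
    apply valid_of
    · refine ⟨1, fun x => ?_⟩
      have : |σ * (θ x - π x)| ≤ 1 := by
        rw [abs_mul, hσ]
        exact mul_le_one₀ hc1 (abs_nonneg _) (dbd x)
      linarith [(abs_le.1 this).1, hπ.1.1 x]
    · simp [p0, t0]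
    · intro x y
      have h1 : |σ * slack (fun x => θ x - π x) x y| ≤ slack π x y := by
        have := cb x y
        rw [abs_mul, abs_of_pos hc0] at this
        rwa [abs_mul, hσ]
      have h2 := (abs_le.1 h1).1
      unfold slack at h2
      linarith
    · intro x m
      simp only [pper, tper]
    · simp [pf, tf]
  have := (hE.2 _ _ (val c (abs_of_pos hc0)) (val (-c) (by rw [abs_neg, abs_of_pos hc0]))
    (by intro x; ring)).1
  funext x
  have hx := congrFun this x
  have : c * (θ x - π x) = 0 := by linarith
  rcases mul_eq_zero.1 this with h | h
  · linarith
  · linarith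

theorem stmt3 (f : ℝ) (hf : f ∈ Set.Ioo (0 : ℝ) 1) (π : ℝ → ℝ)
    (hπ : MinimalValid f π) (hcpl : ContPiecewiseLinear π) :
    ExtremeFunc f π ↔ IsFacet f π := by
  exact ⟨extreme_facet hπ hcpl, facet_extreme⟩
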